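/- Let n ≥ 1, τ > 0, γ > 0, and let M ∈ ℝ^{n×n} satisfy M_{ii} − M_{ij} ≥ γ for all i and all j ≠ i. Then the Frobenius norm of the difference between the row-wise softmax with temperature τ and the identity satisfies ‖S_τ(M) − I_n‖_F ≤ n·√(n−1)·e^{−γ/τ}. -/

import Mathlib

/-- Row-wise softmax with temperature `τ`. -/
noncomputable def softmaxT {n : ℕ} (τ : ℝ) (M : Matrix (Fin n) (Fin n) ℝ) :
    Matrix (Fin n) (Fin n) ℝ :=
  Matrix.of fun i j => Real.exp (M i j / τ) / ∑ k, Real.exp (M i k / τ)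

/-!
A softmax matrix is row-stochastic. If `ε` bounds the off-diagonal entries of a row-stochastic
`n × n` matrix, then the diagonal entry of each row misses `1` by the off-diagonal mass of that
row, which is at most `(n - 1) ε`. The squared distance of a row to the corresponding row of the
identity is thus at most `(n - 1)² ε² + (n - 1) ε² = n (n - 1) ε²`. For the softmax,
`ε = exp (-γ / τ)` works, because the normalising sum in row `i` is at least its diagonal term
`exp (M i i / τ)`.
-/

open Finset Matrix

section RowStochastic

variable {ι R : Type*} [Fintype ι] [DecidableEq ι]

section Ring

variable [Ring R] [PartialOrder R] [IsOrderedRing R]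

lemma sum_univ_erase_le {f : ι → R} {i : ι} {c : R} (hf : ∀ j, j ≠ i → f j ≤ c) :
    ∑ j ∈ univ.erase i, f j ≤ (Fintype.card ι - 1) * c :=
  calc ∑ j ∈ univ.erase i, f j
      ≤ #(univ.erase i) • c := sum_le_card_nsmul _ f c fun j hj => hf j (ne_of_mem_erase hj)
    _ = (Fintype.card ι - 1) * c := by
        rw [nsmul_eq_mul, cast_card_erase_of_mem (mem_univ i), card_univ]

lemma one_sub_diag_le_of_mem_rowStochastic {A : Matrix ι ι R} {ε : R}
    (hA : A ∈ rowStochastic R ι) {i : ι} (hε : ∀ j, j ≠ i → A i j ≤ ε) :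
    1 - A i i ≤ (Fintype.card ι - 1) * ε :=
  calc 1 - A i i
      = ∑ j ∈ univ.erase i, A i j := by
        rw [sum_erase_eq_sub (mem_univ i), sum_row_of_mem_rowStochastic hA]
    _ ≤ (Fintype.card ι - 1) * ε := sum_univ_erase_le hε

end Ring

variable [CommRing R] [PartialOrder R] [IsOrderedRing R] {A : Matrix ι ι R} {ε : R}

lemma sum_row_sq_sub_one_le_of_mem_rowStochastic (hA : A ∈ rowStochastic R ι) {i : ι}
    (hε : ∀ j, j ≠ i → A i j ≤ ε) :
    ∑ j, (A - 1) i j ^ 2 ≤ Fintype.card ι * (Fintype.card ι - 1) * ε ^ 2 := by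
  have diag : (A - 1) i i ^ 2 ≤ ((Fintype.card ι - 1) * ε) ^ 2 := by
    rw [Matrix.sub_apply, one_apply_eq, ← neg_sq, neg_sub]
    exact pow_le_pow_left₀ (sub_nonneg.2 (le_one_of_mem_rowStochastic hA))
      (one_sub_diag_le_of_mem_rowStochastic hA hε) 2
  have off_diag (j : ι) (hj : j ≠ i) : (A - 1) i j ^ 2 ≤ ε ^ 2 := by
    rw [Matrix.sub_apply, one_apply_ne hj.symm, sub_zero]
    exact pow_le_pow_left₀ (nonneg_of_mem_rowStochastic hA) (hε j hj) 2
  calc ∑ j, (A - 1) i j ^ 2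
      = (A - 1) i i ^ 2 + ∑ j ∈ univ.erase i, (A - 1) i j ^ 2 :=
        (add_sum_erase _ _ (mem_univ i)).symm
    _ ≤ ((Fintype.card ι - 1) * ε) ^ 2 + (Fintype.card ι - 1) * ε ^ 2 :=
        add_le_add diag (sum_univ_erase_le off_diag)
    _ = Fintype.card ι * (Fintype.card ι - 1) * ε ^ 2 := by ring

lemma sum_sum_sq_sub_one_le_of_mem_rowStochastic (hA : A ∈ rowStochastic R ι)
    (hε : ∀ i j, j ≠ i → A i j ≤ ε) :
    ∑ i, ∑ j, (A - 1) i j ^ 2 ≤ (Fintype.card ι : R) ^ 2 * (Fintype.card ι - 1) * ε ^ 2 :=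
  calc ∑ i, ∑ j, (A - 1) i j ^ 2
      ≤ ∑ _i : ι, Fintype.card ι * (Fintype.card ι - 1) * ε ^ 2 :=
        sum_le_sum fun i _ => sum_row_sq_sub_one_le_of_mem_rowStochastic hA (hε i)
    _ = (Fintype.card ι : R) ^ 2 * (Fintype.card ι - 1) * ε ^ 2 := by
        rw [sum_const, card_univ, nsmul_eq_mul]
        ring

end RowStochastic

section Softmax

variable {n : ℕ} (τ : ℝ) (M : Matrix (Fin n) (Fin n) ℝ)

lemma softmaxT_mem_rowStochastic : softmaxT τ M ∈ rowStochastic ℝ (Fin n) := by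
  refine mem_rowStochastic_iff_sum.2 ⟨fun i j => ?_, fun i => ?_⟩
  · simp only [softmaxT, of_apply]
    positivity
  · have normaliser_pos : 0 < ∑ k, Real.exp (M i k / τ) :=
      sum_pos (fun k _ => Real.exp_pos _) ⟨i, mem_univ i⟩
    simp only [softmaxT, of_apply]
    rw [← sum_div, div_self normaliser_pos.ne']

lemma softmaxT_apply_le_exp_sub_div (i j k : Fin n) :
    softmaxT τ M i j ≤ Real.exp ((M i j - M i k) / τ) := by
  have exp_le_normaliser : Real.exp (M i k / τ) ≤ ∑ l, Real.exp (M i l / τ) :=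
    single_le_sum (f := fun l => Real.exp (M i l / τ)) (fun l _ => (Real.exp_pos _).le)
      (mem_univ k)
  rw [sub_div, Real.exp_sub]
  exact div_le_div_of_nonneg_left (Real.exp_pos _).le (Real.exp_pos _) exp_le_normaliser

end Softmax

/-- Under diagonal dominance of the logits, the Frobenius-norm distance of the
softmax to the identity matrix is at most `n √(n-1) e^{-γ/τ}`. -/
theorem softmax_frobenius_close_to_id_of_diagonal_dominance {n : ℕ} (hn : 1 ≤ n)
    {τ γ : ℝ} (hτ : 0 < τ) (hγ : 0 < γ) (M : Matrix (Fin n) (Fin n) ℝ)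
    (hM : ∀ i j, j ≠ i → γ ≤ M i i - M i j) :
    Real.sqrt (∑ i, ∑ j, ((softmaxT τ M - 1) i j) ^ 2) ≤
      (n : ℝ) * Real.sqrt ((n : ℝ) - 1) * Real.exp (-γ / τ) := by
  have off_diag (i j : Fin n) (hj : j ≠ i) : softmaxT τ M i j ≤ Real.exp (-γ / τ) := by
    refine (softmaxT_apply_le_exp_sub_div τ M i j i).trans ?_
    gcongr
    linarith [hM i j hj]
  have sum_sq_le :=
    sum_sum_sq_sub_one_le_of_mem_rowStochastic (softmaxT_mem_rowStochastic τ M) off_diag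
  rw [Fintype.card_fin] at sum_sq_le
  have n_sub_one_nonneg : (0 : ℝ) ≤ n - 1 := sub_nonneg.2 (by exact_mod_cast hn)
  refine Real.sqrt_le_iff.2 ⟨by positivity, ?_⟩
  rwa [mul_pow, mul_pow, Real.sq_sqrt n_sub_one_nonneg]
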